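/- arXiv:1108.0586 — 4 statements merged into one kernel-verified Lean document; each statement's English description precedes it below -/
import Mathlib

section
/- Let K be a field of characteristic not 2 and let A be a (not necessarily associative) K-algebra with bilinear product ab. Then A satisfies a·a = 0 and J(a,b,ac) = J(a,b,c)a for all a,b,c if and only if A satisfies ab + ba = 0 and (ac)(bd) = ((ab)c)d + ((bc)d)a + ((cd)a)b + ((da)b)c for all a,b,c,d. -/
/-- The linearization in the repeated variable of the Malcev identity
`(ab)(ac) = ((ab)c)a + ((bc)a)a + ((ca)a)b`. -/
theorem malcev_linearized {R M : Type*} [CommRing R] [AddCommGroup M] [Module R M]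
    (f : M →ₗ[R] M →ₗ[R] M)
    (hf : ∀ a b c : M, f (f a b) (f a c)
      = f (f (f a b) c) a + f (f (f b c) a) a + f (f (f c a) a) b) (a e b c : M) :
    f (f a b) (f e c) + f (f e b) (f a c)
      = f (f (f a b) c) e + f (f (f e b) c) a + f (f (f b c) a) e + f (f (f b c) e) a
        + f (f (f c a) e) b + f (f (f c e) a) b := by
  have h := hf (a + e) b c
  simp only [map_add, LinearMap.add_apply] at h
  rw [hf a b c, hf e b c] at h
  rw [← sub_eq_zero] at h ⊢
  rw [← h]
  abel

/-- For an anticommutative product, the Malcev identity `J(a,b,ac) = J(a,b,c)a` is equivalent to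
`(ab)(ac) = ((ab)c)a + ((bc)a)a + ((ca)a)b`. -/
theorem malcev_identity_iff {R M : Type*} [CommRing R] [AddCommGroup M] [Module R M]
    (f : M →ₗ[R] M →ₗ[R] M) (hskew : ∀ a b : M, f a b = -f b a) (a b c : M) :
    f (f a b) (f a c) + f (f b (f a c)) a + f (f (f a c) a) b
        = f (f (f a b) c + f (f b c) a + f (f c a) b) a ↔
      f (f a b) (f a c) = f (f (f a b) c) a + f (f (f b c) a) a + f (f (f c a) a) b := by
  rw [hskew b (f a c), hskew c a, ← sub_eq_zero,
    ← sub_eq_zero (a := f (f a b) (f a c))]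
  simp only [map_add, map_neg, LinearMap.add_apply, LinearMap.neg_apply]
  constructor <;> intro h <;> rw [← h] <;> abel

/-- For a vector space `A` over a field `K` of characteristic not 2,
with bilinear product `f`, anticommutativity `a·a = 0` together with the Malcev
identity `J(a,b,ac) = J(a,b,c)a` (where `J(a,b,c) = (ab)c + (bc)a + (ca)b`)
hold if and only if `ab + ba = 0` together with Sagle's multilinear identity
`(ac)(bd) = ((ab)c)d + ((bc)d)a + ((cd)a)b + ((da)b)c` hold. -/
theorem malcev_iff_sagle (K : Type) [Field K] (h2 : (2 : K) ≠ 0)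
    (A : Type) [AddCommGroup A] [Module K A]
    (f : A →ₗ[K] A →ₗ[K] A) :
    ((∀ a : A, f a a = 0) ∧
      (∀ a b c : A,
        f (f a b) (f a c) + f (f b (f a c)) a + f (f (f a c) a) b
          = f (f (f a b) c + f (f b c) a + f (f c a) b) a)) ↔
    ((∀ a b : A, f a b + f b a = 0) ∧
      (∀ a b c d : A,
        f (f a c) (f b d)
          = f (f (f a b) c) d + f (f (f b c) d) a + f (f (f c d) a) b
            + f (f (f d a) b) c)) := by
  constructor
  · rintro ⟨halt, hmal⟩
    have hadd (a b : A) : f a b + f b a = 0 := by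
      simpa [halt] using halt (a + b)
    have hskew (a b : A) : f a b = -f b a := eq_neg_of_add_eq_zero_left (hadd a b)
    have hlin := malcev_linearized f fun a b c => (malcev_identity_iff f hskew a b c).1 (hmal a b c)
    refine ⟨hadd, fun a b c d => ?_⟩
    have h₁ := hlin a b c d
    have h₂ := hlin a c d b
    have h₃ := hlin a d b c
    simp only [hskew b a, hskew c a, hskew d a, hskew c b, hskew d b, hskew d c,
      hskew (f b c) (f a d), hskew (f b d) (f a c), hskew (f c d) (f a b),
      map_neg, LinearMap.neg_apply] at h₁ h₂ h₃ ⊢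
    rw [← sub_eq_zero]
    refine (smul_eq_zero_iff_right h2).1 ?_
    linear_combination (norm := module) h₁ - h₂ + h₃
  · rintro ⟨hadd, hsagle⟩
    have hskew (a b : A) : f a b = -f b a := eq_neg_of_add_eq_zero_left (hadd a b)
    have halt (a : A) : f a a = 0 := by
      refine (smul_eq_zero_iff_right h2).1 ?_
      rw [two_smul, hadd]
    refine ⟨halt, fun a b c => (malcev_identity_iff f hskew a b c).2 ?_⟩
    simpa [halt] using hsagle a a b c
end

section
/- Let D be an alternative dialgebra over a field K. Then the dicommutator ⟨a,b⟩ = a ⊣ b − b ⊢ a satisfies right anticommutativity: ⟨a,⟨b,c⟩⟩ + ⟨a,⟨c,b⟩⟩ = 0 for all a,b,c ∈ D. -/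
/-- The dicommutator `⟨a,b⟩ = a ⊣ b − b ⊢ a`. -/
def dicom {K D : Type} [Field K] [AddCommGroup D] [Module K D]
    (l r : D →ₗ[K] D →ₗ[K] D) (a b : D) : D :=
  l a b - r b a

/-- The left associator `(a,b,c)_⊣ = (a ⊣ b) ⊣ c − a ⊣ (b ⊣ c)`. -/
def lAssoc {K D : Type} [Field K] [AddCommGroup D] [Module K D]
    (l : D →ₗ[K] D →ₗ[K] D) (a b c : D) : D :=
  l (l a b) c - l a (l b c)

/-- The right associator `(a,b,c)_⊢ = (a ⊢ b) ⊢ c − a ⊢ (b ⊢ c)`. -/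
def rAssoc {K D : Type} [Field K] [AddCommGroup D] [Module K D]
    (r : D →ₗ[K] D →ₗ[K] D) (a b c : D) : D :=
  r (r a b) c - r a (r b c)

/-- The inner associator `(a,b,c)_× = (a ⊢ b) ⊣ c − a ⊢ (b ⊣ c)`. -/
def xAssoc {K D : Type} [Field K] [AddCommGroup D] [Module K D]
    (l r : D →ₗ[K] D →ₗ[K] D) (a b c : D) : D :=
  l (r a b) c - r a (l b c)

/-- In an alternative dialgebra `D` over a field `K`, the
dicommutator `⟨a,b⟩ = a ⊣ b − b ⊢ a` satisfies right anticommutativity: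
`⟨a,⟨b,c⟩⟩ + ⟨a,⟨c,b⟩⟩ = 0`. -/
theorem dicommutator_right_anticommutative (K : Type) [Field K]
    (D : Type) [AddCommGroup D] [Module K D]
    (l r : D →ₗ[K] D →ₗ[K] D)
    (bar1 : ∀ a b c : D, r (l a b) c = r (r a b) c)
    (bar2 : ∀ a b c : D, l a (l b c) = l a (r b c))
    (alt1 : ∀ a b c : D, lAssoc l a b c + rAssoc r c b a = 0)
    (alt2 : ∀ a b c : D, lAssoc l a b c - rAssoc r b c a = 0)
    (alt3 : ∀ a b c : D, xAssoc l r a b c + rAssoc r a c b = 0) :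
    ∀ a b c : D,
      dicom l r a (dicom l r b c) + dicom l r a (dicom l r c b) = 0 := by
  intro a b c
  simp only [dicom, map_sub, LinearMap.sub_apply, bar1, bar2]
  abel
end

section
/- Let K be a field of characteristic not 2 and not 3, and let D be an alternative dialgebra over K. Then the dicommutator ⟨a,b⟩ = a ⊣ b − b ⊢ a satisfies the di-Malcev identity: ⟨⟨⟨a,b⟩,c⟩,d⟩ − ⟨⟨⟨a,d⟩,b⟩,c⟩ − ⟨⟨a,⟨c,d⟩⟩,b⟩ − ⟨⟨a,c⟩,⟨b,d⟩⟩ − ⟨a,⟨⟨b,c⟩,d⟩⟩ = 0 for all a,b,c,d ∈ D. Consequently every subspace of D closed under the dicommutator is a Malcev dialgebra. -/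
/-- The right anticommutativity law for a binary operation `m`. -/
def RightAnticommutative {D : Type} [AddCommGroup D] (m : D → D → D) : Prop :=
  ∀ a b c : D, m a (m b c) + m a (m c b) = 0

/-- The di-Malcev identity for a binary operation `m`:
`((ab)c)d − ((ad)b)c − (a(cd))b − (ac)(bd) − a((bc)d) = 0`. -/
def DiMalcev {D : Type} [AddCommGroup D] (m : D → D → D) : Prop :=
  ∀ a b c d : D,
    m (m (m a b) c) d - m (m (m a d) b) c - m (m a (m c d)) b
      - m (m a c) (m b d) - m a (m (m b c) d) = 0

/-- In a 0-dialgebra the operations strictly to the left of `⊢` are interchangeable. -/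
theorem right_inner_bar {K D : Type} [Field K] [AddCommGroup D] [Module K D]
    {l r : D →ₗ[K] D →ₗ[K] D}
    (bar1 : ∀ a b c : D, r (l a b) c = r (r a b) c)
    (bar2 : ∀ a b c : D, l a (l b c) = l a (r b c)) (a b c d : D) :
    r (r a (l b c)) d = r (r a (r b c)) d := by
  rw [← bar1, bar2, bar1]

/-- In a 0-dialgebra the operations strictly to the right of `⊣` are interchangeable. -/
theorem left_inner_bar {K D : Type} [Field K] [AddCommGroup D] [Module K D]
    {l r : D →ₗ[K] D →ₗ[K] D}
    (bar2 : ∀ a b c : D, l a (l b c) = l a (r b c)) (a b c d : D) :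
    l a (r b (l c d)) = l a (r b (r c d)) := by
  rw [← bar2, bar2 b, bar2]

/-- The dicommutator of a 0-dialgebra is right anticommutative. -/
theorem rightAnticommutative_dicom {K D : Type} [Field K] [AddCommGroup D] [Module K D]
    {l r : D →ₗ[K] D →ₗ[K] D}
    (bar1 : ∀ a b c : D, r (l a b) c = r (r a b) c)
    (bar2 : ∀ a b c : D, l a (l b c) = l a (r b c)) :
    RightAnticommutative (dicom l r) := by
  intro a b c
  simp only [dicom, map_sub, LinearMap.sub_apply, bar1, bar2]
  abel

/-- The dicommutator of an alternative dialgebra satisfies the di-Malcev identity. -/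
theorem diMalcev_dicom {K D : Type} [Field K] [AddCommGroup D] [Module K D]
    {l r : D →ₗ[K] D →ₗ[K] D}
    (bar1 : ∀ a b c : D, r (l a b) c = r (r a b) c)
    (bar2 : ∀ a b c : D, l a (l b c) = l a (r b c))
    (alt1 : ∀ a b c : D, lAssoc l a b c + rAssoc r c b a = 0)
    (alt2 : ∀ a b c : D, lAssoc l a b c - rAssoc r b c a = 0)
    (alt3 : ∀ a b c : D, xAssoc l r a b c + rAssoc r a c b = 0) :
    DiMalcev (dicom l r) := by
  intro a b c d
  linear_combination (norm := skip)
    (2 : ℤ) • (alt1 a (l c d) b)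
    - alt1 a (l d b) c
    + (2 : ℤ) • (alt1 a b (l d c))
    - alt1 a c (l b d)
    - alt1 a d (l b c)
    - alt1 a d (l c b)
    + (2 : ℤ) • (alt2 (l a b) d c)
    - alt2 (l a c) d b
    - alt2 (l a d) b c
    - alt2 (r b a) c d
    - alt2 (r c a) b d
    + (2 : ℤ) • (alt2 (r d a) c b)
    + alt2 a (l b c) d
    - (2 : ℤ) • (alt2 a (l b d) c)
    - (2 : ℤ) • (alt2 a (l c d) b)
    + alt2 a (l d b) c
    + alt2 a (l d c) b
    + alt2 a d (l c b)
    + (2 : ℤ) • (alt3 (l b c) a d)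
    - alt3 (l b d) a c
    - alt3 (l d c) a b
    + alt3 b (l a d) c
    - (2 : ℤ) • (alt3 b (r c a) d)
    - alt3 b a (l c d)
    + alt3 c (r b a) d
    + alt3 c (r d a) b
    - alt3 c a (l d b)
    + alt3 d (l a b) c
    - (2 : ℤ) • (alt3 d (l a c) b)
    + (2 : ℤ) • (alt3 d a (l c b))
    - congr(l $(alt1 a b c) d)
    - congr(l $(alt1 a b d) c)
    + (2 : ℤ) • congr(l $(alt1 a c d) b)
    + (2 : ℤ) • congr(l $(alt2 a b c) d)
    - congr(l $(alt2 a b d) c)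
    - congr(l $(alt2 a c d) b)
    + congr(l $(alt3 c a b) d)
    + congr(l $(alt3 d a b) c)
    - (2 : ℤ) • congr(l $(alt3 d a c) b)
    - congr(l a $(alt2 b d c))
    + congr(l a $(alt2 c b d))
    + congr(r $(alt2 b c d) a)
    - congr(r $(alt2 c d b) a)
    + congr(r b $(alt1 a c d))
    + congr(r b $(alt1 a d c))
    - congr(r b $(alt2 a c d))
    - (2 : ℤ) • congr(r b $(alt3 c a d))
    - congr(r c $(alt1 a b d))
    + congr(r c $(alt2 a b d))
    + congr(r c $(alt2 a d b))
    + congr(r c $(alt3 b a d))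
    - congr(r d $(alt1 a c b))
    - congr(r d $(alt2 a c b))
    + congr(r d $(alt3 b a c))
  simp only [dicom, lAssoc, rAssoc, xAssoc, map_add, map_sub, map_zero, LinearMap.add_apply,
    LinearMap.sub_apply, LinearMap.zero_apply, bar1, bar2, right_inner_bar bar1 bar2,
    left_inner_bar bar2]
  abel

/-- Over a field `K` of characteristic not 2 and not 3, the
dicommutator of any alternative dialgebra `D` satisfies the di-Malcev identity;
consequently every subspace of `D` closed under the dicommutator is a Malcev
dialgebra (it satisfies right anticommutativity and the di-Malcev identity). -/
theorem dicommutator_di_malcev (K : Type) [Field K]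
    (h2 : (2 : K) ≠ 0) (h3 : (3 : K) ≠ 0)
    (D : Type) [AddCommGroup D] [Module K D]
    (l r : D →ₗ[K] D →ₗ[K] D)
    (bar1 : ∀ a b c : D, r (l a b) c = r (r a b) c)
    (bar2 : ∀ a b c : D, l a (l b c) = l a (r b c))
    (alt1 : ∀ a b c : D, lAssoc l a b c + rAssoc r c b a = 0)
    (alt2 : ∀ a b c : D, lAssoc l a b c - rAssoc r b c a = 0)
    (alt3 : ∀ a b c : D, xAssoc l r a b c + rAssoc r a c b = 0) :
    DiMalcev (dicom l r) ∧
    ∀ p : Submodule K D, (∀ x ∈ p, ∀ y ∈ p, dicom l r x y ∈ p) →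
      ((∀ a ∈ p, ∀ b ∈ p, ∀ c ∈ p,
          dicom l r a (dicom l r b c) + dicom l r a (dicom l r c b) = 0) ∧
       (∀ a ∈ p, ∀ b ∈ p, ∀ c ∈ p, ∀ d ∈ p,
          dicom l r (dicom l r (dicom l r a b) c) d
            - dicom l r (dicom l r (dicom l r a d) b) c
            - dicom l r (dicom l r a (dicom l r c d)) b
            - dicom l r (dicom l r a c) (dicom l r b d)
            - dicom l r a (dicom l r (dicom l r b c) d) = 0)) := by
  have hM := diMalcev_dicom bar1 bar2 alt1 alt2 alt3
  exact ⟨hM, fun _ _ =>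
    ⟨fun a _ b _ c _ => rightAnticommutative_dicom bar1 bar2 a b c,
      fun a _ b _ c _ d _ => hM a b c d⟩⟩
end

section
/- Let K be a field of characteristic not 2 and not 3. Let P be a multilinear polynomial of degree 3 in one formal bilinear operation such that, in every alternative dialgebra over K, P vanishes identically when the formal operation is interpreted as the dicommutator ⟨a,b⟩ = a ⊣ b − b ⊢ a. Then P vanishes identically in every right anticommutative algebra over K; that is, P is a consequence of right anticommutativity. -/
/-- Formal monomials of a single binary operation in variables `x_0, …, x_{n-1}`:
binary trees whose leaves are labelled by variables. -/
inductive BTree (n : ℕ) : Type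
  | leaf : Fin n → BTree n
  | node : BTree n → BTree n → BTree n

namespace BTree

/-- Evaluate a monomial in an algebra with binary operation `m`,
assigning the value `x i` to the variable `i`. -/
def eval {n : ℕ} {V : Type} (m : V → V → V) (x : Fin n → V) : BTree n → V
  | leaf i => x i
  | node s t => m (eval m x s) (eval m x t)

/-- The multiset of variables occurring in a monomial. -/
def vars {n : ℕ} : BTree n → Multiset (Fin n)
  | leaf i => {i}
  | node s t => vars s + vars t

/-- A monomial of degree `n` is multilinear if each of the `n` variables
occurs in it exactly once. -/
def Multilinear {n : ℕ} (t : BTree n) : Prop :=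
  vars t = (Finset.univ : Finset (Fin n)).val

end BTree

namespace BTree

/-- The left-normed monomial `(x_i x_j) x_k`. -/
def leftNormed {n : ℕ} (i j k : Fin n) : BTree n := node (node (leaf i) (leaf j)) (leaf k)

/-- The right-normed monomial `x_i (x_j x_k)`. -/
def rightNormed {n : ℕ} (i j k : Fin n) : BTree n := node (leaf i) (node (leaf j) (leaf k))

lemma eval_rightNormed {n : ℕ} {V : Type} (m : V → V → V) (x : Fin n → V) (i j k : Fin n) :
    (rightNormed i j k).eval m x = m (x i) (m (x j) (x k)) := rfl

lemma card_vars_pos {n : ℕ} (t : BTree n) : 0 < t.vars.card := by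
  induction t with
  | leaf i => simp [vars]
  | node s t hs ht => simp [vars]; omega

lemma eq_leaf_of_card_vars {n : ℕ} {t : BTree n} (h : t.vars.card = 1) : ∃ i, t = leaf i := by
  cases t with
  | leaf i => exact ⟨i, rfl⟩
  | node s t =>
    have := s.card_vars_pos
    have := t.card_vars_pos
    simp [vars] at h
    omega

lemma eq_node_leaf_leaf_of_card_vars {n : ℕ} {t : BTree n} (h : t.vars.card = 2) :
    ∃ i j, t = node (leaf i) (leaf j) := by
  cases t with
  | leaf i => simp [vars] at h
  | node s t =>
    have := s.card_vars_pos
    have := t.card_vars_pos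
    simp only [vars, Multiset.card_add] at h
    obtain ⟨i, rfl⟩ := eq_leaf_of_card_vars (t := s) (by omega)
    obtain ⟨j, rfl⟩ := eq_leaf_of_card_vars (t := t) (by omega)
    exact ⟨i, j, rfl⟩

/-- A monomial of degree three is left-normed or right-normed. -/
lemma eq_leftNormed_or_rightNormed {n : ℕ} {t : BTree n} (h : t.vars.card = 3) :
    ∃ i j k, t = leftNormed i j k ∨ t = rightNormed i j k := by
  cases t with
  | leaf i => simp [vars] at h
  | node s t =>
    have := s.card_vars_pos
    have := t.card_vars_pos
    simp only [vars, Multiset.card_add] at h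
    obtain hs | hs : s.vars.card = 1 ∨ s.vars.card = 2 := by omega
    · obtain ⟨i, rfl⟩ := eq_leaf_of_card_vars hs
      obtain ⟨j, k, rfl⟩ := eq_node_leaf_leaf_of_card_vars (t := t) (by omega)
      exact ⟨i, j, k, Or.inr rfl⟩
    · obtain ⟨i, j, rfl⟩ := eq_node_leaf_leaf_of_card_vars hs
      obtain ⟨k, rfl⟩ := eq_leaf_of_card_vars (t := t) (by omega)
      exact ⟨i, j, k, Or.inl rfl⟩

lemma perm_of_multiset_eq_univ : ∀ i j k a b c : Fin 3, i ≠ j → i ≠ k → j ≠ k →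
    ({a} + {b} + {c} : Multiset (Fin 3)) = (Finset.univ : Finset (Fin 3)).val →
    (a = i ∧ b = j ∧ c = k) ∨ (a = i ∧ b = k ∧ c = j) ∨ (a = j ∧ b = i ∧ c = k) ∨
    (a = j ∧ b = k ∧ c = i) ∨ (a = k ∧ b = i ∧ c = j) ∨ (a = k ∧ b = j ∧ c = i) := by
  decide

/-- The sum over a multilinear polynomial of degree three, written out over the twelve
multilinear monomials. -/
lemma sum_multilinear {K M : Type} [Field K] [AddCommGroup M] [Module K M]
    {P : BTree 3 →₀ K} (hP : ∀ t ∈ P.support, t.Multilinear) (g : BTree 3 → M)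
    {i j k : Fin 3} (hij : i ≠ j) (hik : i ≠ k) (hjk : j ≠ k) :
    P.sum (fun t c => c • g t) =
      P (leftNormed i j k) • g (leftNormed i j k) + P (leftNormed i k j) • g (leftNormed i k j) +
      P (leftNormed j i k) • g (leftNormed j i k) + P (leftNormed j k i) • g (leftNormed j k i) +
      P (leftNormed k i j) • g (leftNormed k i j) + P (leftNormed k j i) • g (leftNormed k j i) +
      P (rightNormed i j k) • g (rightNormed i j k) +
      P (rightNormed i k j) • g (rightNormed i k j) +
      P (rightNormed j i k) • g (rightNormed j i k) +
      P (rightNormed j k i) • g (rightNormed j k i) +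
      P (rightNormed k i j) • g (rightNormed k i j) +
      P (rightNormed k j i) • g (rightNormed k j i) := by
  classical
  have hsub : P.support ⊆
      {leftNormed i j k, leftNormed i k j, leftNormed j i k, leftNormed j k i,
        leftNormed k i j, leftNormed k j i, rightNormed i j k, rightNormed i k j,
        rightNormed j i k, rightNormed j k i, rightNormed k i j, rightNormed k j i} := by
    intro t ht
    have hm : t.vars = (Finset.univ : Finset (Fin 3)).val := hP t ht
    obtain ⟨a, b, c, rfl | rfl⟩ := eq_leftNormed_or_rightNormed (t := t) (by rw [hm]; rfl)
    all_goals
      simp only [leftNormed, rightNormed, vars, ← add_assoc] at hm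
      rcases perm_of_multiset_eq_univ i j k a b c hij hik hjk hm with
        ⟨rfl, rfl, rfl⟩ | ⟨rfl, rfl, rfl⟩ | ⟨rfl, rfl, rfl⟩ | ⟨rfl, rfl, rfl⟩ |
        ⟨rfl, rfl, rfl⟩ | ⟨rfl, rfl, rfl⟩ <;> simp
  rw [Finsupp.sum_of_support_subset P hsub _ (by simp)]
  repeat rw [Finset.sum_insert (by
    simp [leftNormed, rightNormed, hij, hik, hjk, hij.symm, hik.symm, hjk.symm])]
  rw [Finset.sum_singleton]
  abel

end BTree

open BTree

/-- A polynomial `P` is a dicommutator identity over `K` if it vanishes in every alternative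
dialgebra over `K` when the operation is interpreted as the dicommutator. -/
def IsDicommutatorIdentity {K : Type} [Field K] (P : BTree 3 →₀ K) : Prop :=
  ∀ (D : Type) [AddCommGroup D] [Module K D] (l r : D →ₗ[K] D →ₗ[K] D),
    (∀ a b c : D, r (l a b) c = r (r a b) c) →
    (∀ a b c : D, l a (l b c) = l a (r b c)) →
    (∀ a b c : D, (l (l a b) c - l a (l b c)) + (r (r c b) a - r c (r b a)) = 0) →
    (∀ a b c : D, (l (l a b) c - l a (l b c)) - (r (r b c) a - r b (r c a)) = 0) →
    (∀ a b c : D, (l (r a b) c - r a (l b c)) + (r (r a c) b - r a (r c b)) = 0) →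
    ∀ x : Fin 3 → D, P.sum (fun t k => k • BTree.eval (fun a b => l a b - r b a) x t) = 0

section Alternative

variable {K A : Type} [Field K] [AddCommGroup A] [Module K A]

/-- The product `(a, m) ⊣ (b, n) = (a b, m b)` on `A × A`. -/
def diLeft (f : A →ₗ[K] A →ₗ[K] A) : A × A →ₗ[K] A × A →ₗ[K] A × A :=
  LinearMap.mk₂ K (fun p q => (f p.1 q.1, f p.2 q.1))
    (by intros; simp) (by intros; simp) (by intros; simp) (by intros; simp)

/-- The product `(a, m) ⊢ (b, n) = (a b, a n)` on `A × A`. -/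
def diRight (f : A →ₗ[K] A →ₗ[K] A) : A × A →ₗ[K] A × A →ₗ[K] A × A :=
  LinearMap.mk₂ K (fun p q => (f p.1 q.1, f p.1 q.2))
    (by intros; simp) (by intros; simp) (by intros; simp) (by intros; simp)

@[simp] lemma diLeft_apply (f : A →ₗ[K] A →ₗ[K] A) (p q : A × A) :
    diLeft f p q = (f p.1 q.1, f p.2 q.1) := rfl

@[simp] lemma diRight_apply (f : A →ₗ[K] A →ₗ[K] A) (p q : A × A) :
    diRight f p q = (f p.1 q.1, f p.1 q.2) := rfl

/-- A dicommutator identity yields, for each choice of the first variable, a relation between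
the iterated commutators of an alternative algebra with product `f`. -/
lemma IsDicommutatorIdentity.commutator_relation {P : BTree 3 →₀ K}
    (hP : IsDicommutatorIdentity P) (hml : ∀ t ∈ P.support, t.Multilinear)
    {f : A →ₗ[K] A →ₗ[K] A}
    (hl : ∀ a b c, (f (f a b) c - f a (f b c)) + (f (f b a) c - f b (f a c)) = 0)
    (hr : ∀ a b c, (f (f a b) c - f a (f b c)) + (f (f a c) b - f a (f c b)) = 0)
    {i j k : Fin 3} (hij : i ≠ j) (hik : i ≠ k) (hjk : j ≠ k)
    {br : A → A → A} (hbr : ∀ a b, br a b = f a b - f b a) (a b c : A) :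
    P (leftNormed i j k) • br (br a b) c + P (leftNormed i k j) • br (br a c) b +
      (P (rightNormed i j k) - P (rightNormed i k j)) • br a (br b c) = 0 := by
  have hflip : ∀ a b c, (f (f a b) c - f a (f b c)) + (f (f c b) a - f c (f b a)) = 0 := by
    intro a b c
    linear_combination (norm := module) hl a b c - hr b a c + hl b c a
  have hcyc : ∀ a b c, (f (f a b) c - f a (f b c)) - (f (f b c) a - f b (f c a)) = 0 := by
    intro a b c
    linear_combination (norm := module) hl a b c - hr b a c
  have h := hP (A × A) (diLeft f) (diRight f) (by simp) (by simp)
    (by intro x y z; ext <;> simp [hflip])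
    (by intro x y z; ext <;> simp [hcyc])
    (by intro x y z; ext <;> simp [hr])
    (fun n => if n = i then (0, a) else if n = j then (b, 0) else (c, 0))
  rw [sum_multilinear hml _ hij hik hjk] at h
  have h₂ := congrArg Prod.snd h
  simp [leftNormed, rightNormed, BTree.eval, hij.symm, hik.symm, hjk.symm] at h₂
  simp only [hbr, leftNormed, rightNormed, map_sub, LinearMap.sub_apply]
  linear_combination (norm := module) h₂

end Alternative

section Exterior

variable (K : Type) [Field K]

open Matrix

/-- The anticommutative product on `K³ × K³ × K` with
`(u, v, s) (u', v', s') = (0, u × u', v · u' - u · v')`, which is alternative. -/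
def crossDot : (Fin 3 → K) × (Fin 3 → K) × K →ₗ[K] (Fin 3 → K) × (Fin 3 → K) × K →ₗ[K]
    (Fin 3 → K) × (Fin 3 → K) × K :=
  LinearMap.mk₂ K
    (fun p q => (0, crossProduct p.1 q.1, p.2.1 ⬝ᵥ q.1 - p.1 ⬝ᵥ q.2.1))
    (by intros; ext <;> simp; ring)
    (by intros; ext <;> simp; ring)
    (by intros; ext <;> simp; ring)
    (by intros; ext <;> simp; ring)

@[simp] lemma crossDot_apply (p q : (Fin 3 → K) × (Fin 3 → K) × K) :
    crossDot K p q = (0, crossProduct p.1 q.1, p.2.1 ⬝ᵥ q.1 - p.1 ⬝ᵥ q.2.1) := rfl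

lemma crossDot_alternative_left (a b c : (Fin 3 → K) × (Fin 3 → K) × K) :
    (crossDot K (crossDot K a b) c - crossDot K a (crossDot K b c)) +
      (crossDot K (crossDot K b a) c - crossDot K b (crossDot K a c)) = 0 := by
  refine Prod.ext ?_ (Prod.ext ?_ ?_)
  · simp
  · simp
  · simp only [crossDot_apply, Prod.snd_add, Prod.snd_sub, Prod.snd_zero, cross_apply,
      vec3_dotProduct, zero_dotProduct, dotProduct_zero]
    simp
    ring

lemma crossDot_alternative_right (a b c : (Fin 3 → K) × (Fin 3 → K) × K) :
    (crossDot K (crossDot K a b) c - crossDot K a (crossDot K b c)) +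
      (crossDot K (crossDot K a c) b - crossDot K a (crossDot K c b)) = 0 := by
  refine Prod.ext ?_ (Prod.ext ?_ ?_)
  · simp
  · simp
  · simp only [crossDot_apply, Prod.snd_add, Prod.snd_sub, Prod.snd_zero, cross_apply,
      vec3_dotProduct, zero_dotProduct, dotProduct_zero]
    simp
    ring

end Exterior

/-- In a dicommutator identity of degree three, the left-normed monomials do not occur, and the
coefficients of the right-normed monomials are symmetric in the last two variables. -/
lemma IsDicommutatorIdentity.coeff {K : Type} [Field K] (h2 : (2 : K) ≠ 0) (h3 : (3 : K) ≠ 0)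
    {P : BTree 3 →₀ K} (hP : IsDicommutatorIdentity P) (hml : ∀ t ∈ P.support, t.Multilinear)
    {i j k : Fin 3} (hij : i ≠ j) (hik : i ≠ k) (hjk : j ≠ k) :
    P (leftNormed i j k) = 0 ∧ P (rightNormed i j k) = P (rightNormed i k j) := by
  have hmat := hP.commutator_relation hml (f := LinearMap.mul K (Matrix (Fin 2) (Fin 2) K))
    (by intro a b c; simp [mul_assoc]) (by intro a b c; simp [mul_assoc]) hij hik hjk
    (fun a b => rfl)
  have he := congrFun₂ (hmat !![1, 0; 0, -1] !![0, 1; 0, 0] !![0, 0; 1, 0]) 0 0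
  have hf := congrFun₂ (hmat !![0, 1; 0, 0] !![0, 0; 1, 0] !![1, 0; 0, -1]) 0 0
  have hx := congrArg (fun p => p.2.2) <| hP.commutator_relation hml (f := crossDot K)
    (crossDot_alternative_left K) (crossDot_alternative_right K) hij hik hjk (fun a b => rfl)
    (![1, 0, 0], 0, 0) (![0, 1, 0], 0, 0) (![0, 0, 1], 0, 0)
  simp at he hf
  simp [cross_apply] at hx
  have h12 : (2 * 2 * 3 : K) ≠ 0 := mul_ne_zero (mul_ne_zero h2 h2) h3
  have hL : P (leftNormed i j k) = 0 := by
    refine (mul_eq_zero.mp ?_).resolve_left h12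
    linear_combination hx + 2 * hf + 4 * he
  refine ⟨hL, sub_eq_zero.mp ((mul_eq_zero.mp ?_).resolve_left h2)⟩
  linear_combination hf + he - 2 * hL

/-- Over a field `K` of characteristic not 2 and not 3, every
multilinear polynomial identity `P` of degree 3 (in one formal bilinear
operation) satisfied by the dicommutator `⟨a,b⟩ = a ⊣ b − b ⊢ a` in every
alternative dialgebra over `K` is satisfied in every right anticommutative
algebra over `K`; that is, `P` is a consequence of right anticommutativity. -/
theorem degree3_dicommutator_identities (K : Type) [Field K]
    (h2 : (2 : K) ≠ 0) (h3 : (3 : K) ≠ 0)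
    (P : BTree 3 →₀ K) (hml : ∀ t ∈ P.support, t.Multilinear)
    (hvanish : ∀ (D : Type) [AddCommGroup D] [Module K D]
      (l r : D →ₗ[K] D →ₗ[K] D),
      (∀ a b c : D, r (l a b) c = r (r a b) c) →
      (∀ a b c : D, l a (l b c) = l a (r b c)) →
      (∀ a b c : D, (l (l a b) c - l a (l b c)) + (r (r c b) a - r c (r b a)) = 0) →
      (∀ a b c : D, (l (l a b) c - l a (l b c)) - (r (r b c) a - r b (r c a)) = 0) →
      (∀ a b c : D, (l (r a b) c - r a (l b c)) + (r (r a c) b - r a (r c b)) = 0) →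
      ∀ x : Fin 3 → D,
        P.sum (fun t k => k • BTree.eval (fun a b => l a b - r b a) x t) = 0) :
    ∀ (A : Type) [AddCommGroup A] [Module K A] (f : A →ₗ[K] A →ₗ[K] A),
      (∀ a b c : A, f a (f b c) + f a (f c b) = 0) →
      ∀ x : Fin 3 → A,
        P.sum (fun t k => k • BTree.eval (fun a b => f a b) x t) = 0 := by
  intro A _ _ f hf x
  have hP : IsDicommutatorIdentity P := hvanish
  have h01 : (0 : Fin 3) ≠ 1 := by decide
  have h02 : (0 : Fin 3) ≠ 2 := by decide
  have h12 : (1 : Fin 3) ≠ 2 := by decide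
  rw [sum_multilinear hml _ h01 h02 h12,
    (hP.coeff h2 h3 hml h01 h02 h12).1, (hP.coeff h2 h3 hml h02 h01 h12.symm).1,
    (hP.coeff h2 h3 hml h01.symm h12 h02).1, (hP.coeff h2 h3 hml h12 h01.symm h02.symm).1,
    (hP.coeff h2 h3 hml h02.symm h12.symm h01).1, (hP.coeff h2 h3 hml h12.symm h02.symm h01.symm).1,
    (hP.coeff h2 h3 hml h01 h02 h12).2, (hP.coeff h2 h3 hml h01.symm h12 h02).2,
    (hP.coeff h2 h3 hml h02.symm h12.symm h01).2]
  simp only [eval_rightNormed]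
  linear_combination (norm := module) P (rightNormed 0 2 1) • hf (x 0) (x 1) (x 2) +
    P (rightNormed 1 2 0) • hf (x 1) (x 0) (x 2) + P (rightNormed 2 1 0) • hf (x 2) (x 0) (x 1)
end
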